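/- Let k ≥ 1, n = 2^k, and identify [n] with {0,1}^k. For a ∈ {0,1}^k and x : {0,1}^k → {0,1}, let J_{a,x} = |{ j ∈ {0,1}^k : j ≠ 0^k and a·j = x_{0^k} ⊕ x_j }|, where · is the inner product mod 2. For a real threshold t, let Z_a(x) be the indicator that J_{a,x} ≥ t. Then for every threshold t and all a ≠ b in {0,1}^k, the random variables Z_a and Z_b (with x uniformly distributed on {0,1}^n) have non-positive covariance: E_x[Z_a Z_b] ≤ E_x[Z_a]·E_x[Z_b]. -/

import Mathlib

open scoped Classical
open Finset

/-- Inner product mod 2 on `{0,1}^k`, as a Boolean. -/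
def bdot {k : ℕ} (a b : Fin k → Bool) : Bool :=
  decide ((Finset.univ.filter fun t => a t && b t).card % 2 = 1)

/-- `J a x` counts the `j ≠ 0^k` with `a·j = x_{0^k} ⊕ x_j`. -/
def Jcount {k : ℕ} (a : Fin k → Bool) (x : (Fin k → Bool) → Bool) : ℕ :=
  (Finset.univ.filter fun j : Fin k → Bool =>
    j ≠ (fun _ => false) ∧ bdot a j = xor (x fun _ => false) (x j)).card

open scoped BigOperators

/-!
Off `0^k`, the pattern recording where `x_{0^k} ⊕ x_j` agrees with `a·j` is uniform. The functions
`a·j` and `b·j` agree at `N = n/2 - 1` of these indices and differ at the other `N + 1`, so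
`J_a = |ε| + |δ|` and `J_b = |ε| + |¬δ|` with `ε ∈ {0,1}^N` and `δ ∈ {0,1}^{N+1}` uniform and
independent. Split off one coordinate `v` of `δ`, and let `σ` record where the rest of `δ` equals
`ε`. Then `J_a = N + v + W_σ` and `J_b = N + (1 - v) + W_{¬σ}`, where `W_σ` and `W_{¬σ}` sum the
signs of `ε` over the coordinates where `σ` is true, respectively false.

Given `σ` and `v`, the two sums are independent simple random walks, of lengths `|σ|` and `N - |σ|`.
Both tails increase with the starting point, and the starting points move oppositely in `v`, so
Chebyshev's inequality decouples them after averaging over `v`. Each averaged tail has the form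
`(1 + E sgn S_s) / 2`, where `S` is a simple random walk with a fixed start and `s` is its length,
and `E sgn S_s` keeps its sign and shrinks in absolute value as `s` grows. As `|σ|` and `N - |σ|`
move oppositely, Chebyshev's inequality applies again to the average over `σ`.
-/

section Expectation

variable {ι κ M : Type*} [Fintype ι] [Fintype κ] [AddCommMonoid M] [Module ℚ≥0 M]

lemma expect_comp_of_bijective {φ : ι → κ} (h : φ.Bijective) (F : κ → M) :
    𝔼 i, F (φ i) = 𝔼 j, F j :=
  Fintype.expect_bijective φ h _ _ fun _ => rfl

lemma expect_pi_split_subtype [DecidableEq ι] (p : ι → Prop) [DecidablePred p]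
    (F : ({i // p i} → κ) → ({i // ¬p i} → κ) → M) :
    𝔼 f : ι → κ, F (fun i => f i) (fun i => f i) = 𝔼 u, 𝔼 v, F u v := by
  rw [← expect_product', univ_product_univ]
  exact Fintype.expect_equiv (Equiv.piEquivPiSubtypeProd p fun _ => κ) _ _ fun _ => rfl

lemma expect_pi_split_at [DecidableEq ι] (o : ι) (F : κ → ({i // i ≠ o} → κ) → M) :
    𝔼 f : ι → κ, F (f o) (fun i => f i) = 𝔼 c, 𝔼 f, F c f := by
  rw [← expect_product', univ_product_univ]
  exact Fintype.expect_equiv (Equiv.funSplitAt o κ) _ _ fun _ => rfl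

lemma expect_bool {𝕜 : Type*} [Semifield 𝕜] [CharZero 𝕜] (f : Bool → 𝕜) :
    𝔼 b, f b = (f true + f false) / 2 := by
  rw [Fintype.expect_eq_sum_div_card, Fintype.sum_bool, Fintype.card_bool, Nat.cast_ofNat]

lemma expect_mul_le_of_antivary {𝕜 : Type*} [Field 𝕜] [LinearOrder 𝕜] [IsStrictOrderedRing 𝕜]
    {f g : ι → 𝕜} (h : Antivary f g) : 𝔼 i, f i * g i ≤ (𝔼 i, f i) * 𝔼 i, g i := by
  simp only [Fintype.expect_eq_sum_div_card]
  rcases isEmpty_or_nonempty ι with _ | _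
  · simp
  have hcard : (0 : 𝕜) < Fintype.card ι := by exact_mod_cast Fintype.card_pos
  rw [div_mul_div_comm, div_le_div_iff₀ hcard (by positivity)]
  linarith [mul_le_mul_of_nonneg_left h.card_mul_sum_le_sum_mul_sum hcard.le]

end Expectation

section Antivary

variable {ι : Type*}

lemma antivary_comp_of_monotone_or_antitone {α β : Type*} [LinearOrder α] [LinearOrder β]
    {u v : ι → α} (h : Antivary u v) {q : α → β} (hq : Monotone q ∨ Antitone q) :
    Antivary (q ∘ u) (q ∘ v) := by
  rcases hq with hq | hq
  · exact ((h.comp_monotone_left hq).symm.comp_monotone_left hq).symm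
  · exact ((h.comp_antitone_left hq).symm.comp_antitone_left hq).symm

lemma antivary_card_subtype_card_compl [Fintype ι] :
    Antivary (fun σ : ι → Bool => Fintype.card {i // σ i}) fun σ => Fintype.card {i // ¬σ i} := by
  intro σ τ h
  have hσ := Fintype.card_subtype_compl fun i => σ i = true
  have hτ := Fintype.card_subtype_compl fun i => τ i = true
  dsimp only at h ⊢
  omega

end Antivary

section Walk

/-- The one-step transition operator of the simple random walk on `ℤ`: `(walkStep ^ s) f d` is the
expected value of `f` after `s` steps from `d`. -/
noncomputable def walkStep : Module.End ℝ (ℤ → ℝ) where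
  toFun f d := (f (d + 1) + f (d - 1)) / 2
  map_add' f g := by ext d; simp only [Pi.add_apply]; ring
  map_smul' r f := by ext d; simp only [Pi.smul_apply, smul_eq_mul, RingHom.id_apply]; ring

lemma walkStep_apply (f : ℤ → ℝ) (d : ℤ) : walkStep f d = (f (d + 1) + f (d - 1)) / 2 := rfl

lemma walkStep_pow_succ_apply (s : ℕ) (f : ℤ → ℝ) (d : ℤ) :
    (walkStep ^ (s + 1)) f d = ((walkStep ^ s) f (d + 1) + (walkStep ^ s) f (d - 1)) / 2 := by
  rw [pow_succ', Module.End.mul_apply, walkStep_apply]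

lemma walkStep_pow_comp_add (f : ℤ → ℝ) (c : ℤ) (s : ℕ) (d : ℤ) :
    (walkStep ^ s) (fun e => f (e + c)) d = (walkStep ^ s) f (d + c) := by
  induction s generalizing d with
  | zero => rfl
  | succ s ih => simp only [walkStep_pow_succ_apply, ih, add_right_comm, sub_add_eq_add_sub]

lemma walkStep_pow_const (r : ℝ) (s : ℕ) : (walkStep ^ s) (fun _ => r) = fun _ => r := by
  induction s with
  | zero => rfl
  | succ s ih => ext d; simp [walkStep_pow_succ_apply, ih]

lemma monotone_walkStep_pow {f : ℤ → ℝ} (hf : Monotone f) (s : ℕ) :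
    Monotone ((walkStep ^ s) f) := by
  induction s with
  | zero => exact hf
  | succ s ih =>
    intro c d hcd
    simp only [walkStep_pow_succ_apply]
    linarith [ih (add_le_add_left hcd 1), ih (sub_le_sub_right hcd 1)]

lemma odd_walkStep_pow {f : ℤ → ℝ} (hf : f.Odd) (s : ℕ) : ((walkStep ^ s) f).Odd := by
  induction s with
  | zero => exact hf
  | succ s ih =>
    intro d
    have hplus := ih (d + 1)
    have hminus := ih (d - 1)
    rw [neg_add'] at hplus
    rw [neg_sub', sub_neg_eq_add] at hminus
    simp only [walkStep_pow_succ_apply]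
    linarith

lemma walkStep_pow_nonneg_of_odd {f : ℤ → ℝ} (hodd : f.Odd) (hf : ∀ d, 0 ≤ d → 0 ≤ f d) (s : ℕ) :
    ∀ d, 0 ≤ d → 0 ≤ (walkStep ^ s) f d := by
  induction s with
  | zero => exact hf
  | succ s ih =>
    intro d hd
    rcases hd.eq_or_lt with rfl | hd
    · exact (odd_walkStep_pow hodd _).map_zero.ge
    · rw [walkStep_pow_succ_apply]
      linarith [ih (d + 1) (by omega), ih (d - 1) (by omega)]

lemma antitone_walkStep_pow_of_odd {f : ℤ → ℝ} (hodd : f.Odd)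
    (hf : ∀ d, 0 ≤ d → walkStep f d ≤ f d) {d : ℤ} (hd : 0 ≤ d) :
    Antitone fun s => (walkStep ^ s) f d := by
  have hodd_drop : (f - walkStep f).Odd := by
    have hstep : (walkStep f).Odd := by simpa using odd_walkStep_pow hodd 1
    intro c
    simp only [Pi.sub_apply, hodd c, hstep c]
    ring
  refine antitone_nat_of_succ_le fun s => ?_
  have hdrop := walkStep_pow_nonneg_of_odd hodd_drop (fun c hc => sub_nonneg.2 (hf c hc)) s d hd
  rw [map_sub, Pi.sub_apply, sub_nonneg] at hdrop
  rwa [pow_succ, Module.End.mul_apply]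

lemma monotone_or_antitone_walkStep_pow_of_odd {f : ℤ → ℝ} (hodd : f.Odd)
    (hf : ∀ d, 0 ≤ d → walkStep f d ≤ f d) (d : ℤ) :
    (Monotone fun s => (walkStep ^ s) f d) ∨ Antitone fun s => (walkStep ^ s) f d := by
  rcases le_total 0 d with hd | hd
  · exact .inr (antitone_walkStep_pow_of_odd hodd hf hd)
  · left
    convert (antitone_walkStep_pow_of_odd hodd hf (neg_nonneg.2 hd)).neg using 2 with s
    simp [odd_walkStep_pow hodd s d]

lemma walkStep_sign_le {d : ℤ} (hd : 0 ≤ d) :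
    walkStep (fun e => (e.sign : ℝ)) d ≤ d.sign := by
  rw [walkStep_apply]
  rcases hd.eq_or_lt with rfl | hd
  · simp
  · have hpred : ((d - 1).sign : ℝ) ≤ 1 := by
      rcases Int.sign_trichotomy (d - 1) with h | h | h <;> simp [h]
    rw [Int.sign_eq_one_of_pos hd, Int.sign_eq_one_of_pos (by omega : 0 < d + 1), Int.cast_one]
    linarith

/-- The indicator of the positive integers, as a real-valued function on `ℤ`. -/
def posIndicator (d : ℤ) : ℝ := if 0 < d then 1 else 0

lemma monotone_posIndicator : Monotone posIndicator := by
  intro c d hcd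
  unfold posIndicator
  split_ifs <;> first | omega | norm_num

lemma posIndicator_add_posIndicator_succ (d : ℤ) :
    posIndicator d + posIndicator (d + 1) = 1 + d.sign := by
  unfold posIndicator
  rcases lt_trichotomy d 0 with hd | rfl | hd
  · rw [if_neg (by omega), if_neg (by omega), Int.sign_eq_neg_one_of_neg hd]; norm_num
  · norm_num
  · rw [if_pos (by omega), if_pos (by omega), Int.sign_eq_one_of_pos hd]; norm_num

/-- The probability that a simple random walk started at `m` or `m + 1`, with equal probability, is
positive after `s` steps. Without the random start, the parity of `s` would destroy the monotonicity
in `s`. -/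
noncomputable def smoothedTail (m : ℤ) (s : ℕ) : ℝ :=
  𝔼 v : Bool, (walkStep ^ s) posIndicator (m + v.toNat)

lemma smoothedTail_eq (m : ℤ) (s : ℕ) :
    smoothedTail m s = (1 + (walkStep ^ s) (fun d => (d.sign : ℝ)) m) / 2 := by
  have hsplit : posIndicator + (fun d => posIndicator (d + 1)) =
      (fun _ => 1) + fun d => (d.sign : ℝ) :=
    funext posIndicator_add_posIndicator_succ
  have h := congrFun (congrArg (walkStep ^ s) hsplit) m
  simp only [map_add, Pi.add_apply, walkStep_pow_comp_add, walkStep_pow_const] at h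
  rw [smoothedTail, expect_bool, ← h, add_comm]
  simp

lemma monotone_or_antitone_smoothedTail (m : ℤ) :
    Monotone (smoothedTail m) ∨ Antitone (smoothedTail m) := by
  have hodd : Function.Odd fun d : ℤ => (d.sign : ℝ) := fun d => by simp
  refine (monotone_or_antitone_walkStep_pow_of_odd hodd (fun d => walkStep_sign_le) m).imp ?_ ?_ <;>
  · intro h s t hst
    simp only [smoothedTail_eq]
    linarith [h hst]

end Walk

section SignSums

variable {ι : Type*} [Fintype ι] [DecidableEq ι]

/-- The step `1` or `-1` of a walk encoded by a Boolean. -/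
def boolSign (b : Bool) : ℤ := if b then 1 else -1

lemma expect_comp_add_sum_boolSign (f : ℤ → ℝ) (d : ℤ) :
    𝔼 ε : ι → Bool, f (d + ∑ i, boolSign (ε i)) = (walkStep ^ Fintype.card ι) f d := by
  induction hs : Fintype.card ι generalizing ι d with
  | zero =>
    have := Fintype.card_eq_zero_iff.1 hs
    simp
  | succ s ih =>
    obtain ⟨o⟩ : Nonempty ι := Fintype.card_pos_iff.1 (by omega)
    have hcard : Fintype.card {i // i ≠ o} = s := by
      rw [Fintype.card_subtype_compl, Fintype.card_subtype_eq, hs, Nat.add_sub_cancel]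
    calc 𝔼 ε : ι → Bool, f (d + ∑ i, boolSign (ε i))
        = 𝔼 ε : ι → Bool, f (d + boolSign (ε o) + ∑ i : {i // i ≠ o}, boolSign (ε i)) := by
          simp only [Fintype.sum_eq_add_sum_subtype_ne (fun _ => boolSign _) o, add_assoc]
      _ = 𝔼 c, 𝔼 ε : {i // i ≠ o} → Bool, f (d + boolSign c + ∑ i, boolSign (ε i)) :=
          expect_pi_split_at o fun c ε => f (d + boolSign c + ∑ i, boolSign (ε i))
      _ = (walkStep ^ (s + 1)) f d := by
          simp only [ih _ hcard, expect_bool, walkStep_pow_succ_apply]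
          rfl

variable (p : ι → Prop) [DecidablePred p]

lemma expect_comp_sum_subtype_mul_comp_sum_compl (f g : ℤ → ℝ) (c d : ℤ) :
    𝔼 ε : ι → Bool, f (c + ∑ i : {i // p i}, boolSign (ε i)) *
        g (d + ∑ i : {i // ¬p i}, boolSign (ε i)) =
      (walkStep ^ Fintype.card {i // p i}) f c * (walkStep ^ Fintype.card {i // ¬p i}) g d := by
  rw [expect_pi_split_subtype p fun u v =>
      f (c + ∑ i, boolSign (u i)) * g (d + ∑ i, boolSign (v i)),
    ← Fintype.expect_mul_expect, expect_comp_add_sum_boolSign, expect_comp_add_sum_boolSign]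

lemma expect_posIndicator_sum_subtype (m : ℤ) :
    𝔼 v : Bool, 𝔼 ε : ι → Bool, posIndicator (m + v.toNat + ∑ i : {i // p i}, boolSign (ε i)) =
      smoothedTail m (Fintype.card {i // p i}) := by
  refine expect_congr rfl fun v _ => ?_
  simpa [walkStep_pow_const] using
    expect_comp_sum_subtype_mul_comp_sum_compl p posIndicator (fun _ => 1) (m + v.toNat) 0

lemma expect_posIndicator_mul_le_smoothedTail_mul (m : ℤ) :
    𝔼 v : Bool, 𝔼 ε : ι → Bool,
        posIndicator (m + v.toNat + ∑ i : {i // p i}, boolSign (ε i)) *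
          posIndicator (m + (!v).toNat + ∑ i : {i // ¬p i}, boolSign (ε i)) ≤
      smoothedTail m (Fintype.card {i // p i}) * smoothedTail m (Fintype.card {i // ¬p i}) := by
  let tail (s : ℕ) (v : Bool) : ℝ := (walkStep ^ s) posIndicator (m + v.toNat)
  have hmono (s : ℕ) : Monotone (tail s) :=
    (monotone_walkStep_pow monotone_posIndicator s).comp fun b c hbc => by
      simpa using Bool.toNat_le_toNat hbc
  have hanti := (hmono (Fintype.card {i // p i})).antivary
    ((hmono (Fintype.card {i // ¬p i})).comp_antitone (compl_antitone Bool))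
  simp only [expect_comp_sum_subtype_mul_comp_sum_compl]
  refine (expect_mul_le_of_antivary hanti).trans_eq (congrArg _ ?_)
  exact expect_comp_of_bijective Bool.involutive_not.bijective (tail _)

lemma expect_posIndicator_mul_le (m : ℤ) :
    𝔼 σ : ι → Bool, 𝔼 v : Bool, 𝔼 ε : ι → Bool,
        posIndicator (m + v.toNat + ∑ i : {i // σ i}, boolSign (ε i)) *
          posIndicator (m + (!v).toNat + ∑ i : {i // ¬σ i}, boolSign (ε i)) ≤
      (𝔼 σ : ι → Bool, 𝔼 v : Bool, 𝔼 ε : ι → Bool,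
        posIndicator (m + v.toNat + ∑ i : {i // σ i}, boolSign (ε i))) *
      𝔼 σ : ι → Bool, 𝔼 v : Bool, 𝔼 ε : ι → Bool,
        posIndicator (m + (!v).toNat + ∑ i : {i // ¬σ i}, boolSign (ε i)) := by
  have hflip (σ : ι → Bool) :
      𝔼 v : Bool, 𝔼 ε : ι → Bool,
        posIndicator (m + (!v).toNat + ∑ i : {i // ¬σ i}, boolSign (ε i)) =
      smoothedTail m (Fintype.card {i // ¬σ i}) := by
    rw [← expect_posIndicator_sum_subtype]
    exact expect_comp_of_bijective Bool.involutive_not.bijective fun v =>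
      𝔼 ε : ι → Bool, posIndicator (m + v.toNat + ∑ i : {i // ¬σ i}, boolSign (ε i))
  simp only [expect_posIndicator_sum_subtype, hflip]
  calc _ ≤ 𝔼 σ : ι → Bool, smoothedTail m (Fintype.card {i // σ i}) *
          smoothedTail m (Fintype.card {i // ¬σ i}) :=
        expect_le_expect fun σ _ => expect_posIndicator_mul_le_smoothedTail_mul (fun i => σ i) m
    _ ≤ _ := expect_mul_le_of_antivary <| antivary_comp_of_monotone_or_antitone
        antivary_card_subtype_card_compl (monotone_or_antitone_smoothedTail m)

end SignSums

section TrueCount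

variable {ι κ : Type*} [Fintype ι] [Fintype κ]

/-- The number of coordinates at which `ε` is true, as an integer. -/
def trueCount (ε : ι → Bool) : ℤ := ∑ i, ((ε i).toNat : ℤ)

lemma trueCount_comp_equiv (e : κ ≃ ι) (ε : ι → Bool) : trueCount (ε ∘ e) = trueCount ε :=
  e.sum_comp fun i => ((ε i).toNat : ℤ)

lemma trueCount_split_at [DecidableEq ι] (o : ι) (ε : ι → Bool) :
    trueCount ε = (ε o).toNat + trueCount fun i : {i // i ≠ o} => ε i :=
  Fintype.sum_eq_add_sum_subtype_ne _ o

lemma trueCount_split_subtype (p : ι → Prop) [DecidablePred p] (ε : ι → Bool) :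
    trueCount ε = (trueCount fun i : {i // p i} => ε i) + trueCount fun i : {i // ¬p i} => ε i :=
  (Fintype.sum_subtype_add_sum_subtype p _).symm

lemma trueCount_add_trueCount_beq (p : ι → Prop) [DecidablePred p] (ε : ι → Bool) :
    trueCount ε + trueCount (fun i => ε i == decide (p i)) =
      Fintype.card ι + ∑ i : {i // p i}, boolSign (ε i) := by
  have hterm (i : ι) : ((ε i).toNat : ℤ) + (ε i == decide (p i)).toNat =
      1 + if p i then boolSign (ε i) else 0 := by
    by_cases hp : p i <;> cases ε i <;> simp [hp, boolSign]
  rw [trueCount, trueCount, ← sum_add_distrib, sum_congr rfl fun i _ => hterm i, sum_add_distrib,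
    ← sum_filter, ← sum_subtype_eq_sum_filter]
  simp

variable [DecidableEq ι] {M : Type*} [AddCommMonoid M] [Module ℚ≥0 M] (K : ℤ → ℤ → M)

-- For fixed `ε`, substitute `δ = (ε == σ)`: then `σ i` says which of the two counts moves with `i`.
lemma expect_trueCount_add_trueCount_not :
    𝔼 ε : ι → Bool, 𝔼 δ : ι → Bool,
        K (trueCount ε + trueCount δ) (trueCount ε + trueCount fun i => !δ i) =
      𝔼 σ : ι → Bool, 𝔼 ε : ι → Bool,
        K (Fintype.card ι + ∑ i : {i // σ i}, boolSign (ε i))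
          (Fintype.card ι + ∑ i : {i // ¬σ i}, boolSign (ε i)) := by
  refine Eq.trans (expect_congr rfl fun ε _ => ?_) (expect_comm ..)
  have beq_beq (b c : Bool) : (b == (b == c)) = c := by revert b c; decide
  have beq_not (b c : Bool) : (b == !c) = !(b == c) := by revert b c; decide
  have hinv : Function.Involutive fun (σ : ι → Bool) i => ε i == σ i :=
    fun σ => funext fun i => beq_beq (ε i) (σ i)
  rw [← expect_comp_of_bijective hinv.bijective]
  refine expect_congr rfl fun σ _ => ?_
  rw [← trueCount_add_trueCount_beq fun i => σ i = true,
    ← trueCount_add_trueCount_beq fun i => ¬σ i = true]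
  simp only [Bool.decide_eq_true, decide_not, beq_not]

lemma expect_trueCount_not_of_card_eq_succ [DecidableEq κ]
    (h : Fintype.card κ = Fintype.card ι + 1) :
    𝔼 δ : κ → Bool, K (trueCount δ) (trueCount fun i => !δ i) =
      𝔼 v : Bool, 𝔼 δ : ι → Bool,
        K (v.toNat + trueCount δ) ((!v).toNat + trueCount fun i => !δ i) := by
  obtain ⟨o⟩ : Nonempty κ := Fintype.card_pos_iff.1 (by omega)
  have hcard : Fintype.card {i // i ≠ o} = Fintype.card ι := by
    rw [Fintype.card_subtype_compl, Fintype.card_subtype_eq, h, Nat.add_sub_cancel]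
  let e := Fintype.equivOfCardEq hcard
  simp only [trueCount_split_at o]
  rw [expect_pi_split_at o fun v δ =>
    K (v.toNat + trueCount δ) ((!v).toNat + trueCount fun i => !δ i)]
  refine expect_congr rfl fun v _ => ?_
  rw [← expect_comp_of_bijective (e.arrowCongr (.refl Bool)).symm.bijective]
  refine expect_congr rfl fun δ _ => ?_
  rw [← trueCount_comp_equiv e δ, ← trueCount_comp_equiv e fun i => !δ i]
  rfl

variable (p : ι → Prop) [DecidablePred p]

lemma expect_trueCount_beq :
    𝔼 y : ι → Bool, K (trueCount y) (trueCount fun i => y i == decide (p i)) =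
      𝔼 ε : {i // p i} → Bool, 𝔼 δ : {i // ¬p i} → Bool,
        K (trueCount ε + trueCount δ) (trueCount ε + trueCount fun i => !δ i) := by
  rw [← expect_pi_split_subtype p fun ε δ =>
    K (trueCount ε + trueCount δ) (trueCount ε + trueCount fun i => !δ i)]
  refine expect_congr rfl fun y _ => ?_
  rw [trueCount_split_subtype p y, trueCount_split_subtype p fun i => y i == decide (p i)]
  congr 3 <;> ext ⟨i, hi⟩ <;> simp [hi]

lemma expect_trueCount_beq_of_card_compl_eq_succ
    (h : Fintype.card {i // ¬p i} = Fintype.card {i // p i} + 1) :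
    𝔼 y : ι → Bool, K (trueCount y) (trueCount fun i => y i == decide (p i)) =
      𝔼 σ : {i // p i} → Bool, 𝔼 v : Bool, 𝔼 ε : {i // p i} → Bool,
        K (v.toNat + (Fintype.card {i // p i} + ∑ i : {i // σ i}, boolSign (ε i)))
          ((!v).toNat + (Fintype.card {i // p i} + ∑ i : {i // ¬σ i}, boolSign (ε i))) := by
  calc
    _ = 𝔼 ε : {i // p i} → Bool, 𝔼 δ : {i // ¬p i} → Bool,
          K (trueCount ε + trueCount δ) (trueCount ε + trueCount fun i => !δ i) :=
      expect_trueCount_beq K p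
    _ = 𝔼 ε : {i // p i} → Bool, 𝔼 v : Bool, 𝔼 δ : {i // p i} → Bool,
          K (v.toNat + (trueCount ε + trueCount δ))
            ((!v).toNat + (trueCount ε + trueCount fun i => !δ i)) := by
      refine expect_congr rfl fun ε _ => ?_
      rw [expect_trueCount_not_of_card_eq_succ
        (fun c d => K (trueCount ε + c) (trueCount ε + d)) h]
      simp only [add_left_comm]
    _ = 𝔼 v : Bool, 𝔼 σ : {i // p i} → Bool, 𝔼 ε : {i // p i} → Bool,
          K (v.toNat + (Fintype.card {i // p i} + ∑ i : {i // σ i}, boolSign (ε i)))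
            ((!v).toNat + (Fintype.card {i // p i} + ∑ i : {i // ¬σ i}, boolSign (ε i))) := by
      rw [expect_comm]
      exact expect_congr rfl fun v _ =>
        expect_trueCount_add_trueCount_not fun c d => K (v.toNat + c) ((!v).toNat + d)
    _ = _ := expect_comm ..

end TrueCount

section Agreement

variable {ι : Type*} [Fintype ι] [DecidableEq ι]

/-- The number of indices `j ≠ o` at which `α` agrees with `j ↦ x o ⊕ x j`; for `o = 0^k` and
`α = bdot a` this is `Jcount a x`. -/
def agreementCount (o : ι) (α x : ι → Bool) : ℤ :=
  trueCount fun j : {j // j ≠ o} => α j == (x o ^^ x j)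

lemma agreementCount_eq_Jcount {k : ℕ} (a : Fin k → Bool) (x : (Fin k → Bool) → Bool) :
    agreementCount (fun _ => false) (bdot a) x = Jcount a x := by
  rw [Jcount, ← filter_filter, card_filter, Nat.cast_sum, agreementCount, trueCount,
    sum_subtype _ (p := fun j : Fin k → Bool => j ≠ fun _ => false) (by simp)]
  refine sum_congr rfl fun j _ => ?_
  split_ifs with h <;> simp [h]

lemma expect_agreement_pattern {M : Type*} [AddCommMonoid M] [Module ℚ≥0 M] (o : ι)
    (α : ι → Bool) (F : ({j // j ≠ o} → Bool) → M) :
    𝔼 x : ι → Bool, F (fun j => α j == (x o ^^ x j)) = 𝔼 y, F y := by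
  rw [expect_pi_split_at o fun c y => F fun j => α j == (c ^^ y j)]
  have beq_xor (a c b : Bool) : (a == (c ^^ (a == (c ^^ b)))) = b := by revert a c b; decide
  have hinv (c : Bool) : Function.Involutive
      fun (y : {j // j ≠ o} → Bool) j => α j == (c ^^ y j) :=
    fun y => funext fun j => beq_xor (α j) c (y j)
  simp only [expect_comp_of_bijective (hinv _).bijective, Fintype.expect_const]

lemma ite_le_eq_posIndicator (t n : ℤ) :
    (if t ≤ n then (1 : ℝ) else 0) = posIndicator (n + (1 - t)) :=
  if_congr (by omega) rfl rfl

lemma expect_agreementCount_ge_mul_le (o : ι) (α β : ι → Bool)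
    (h : Fintype.card {j : {j // j ≠ o} // ¬α j = β j} =
      Fintype.card {j : {j // j ≠ o} // α j = β j} + 1) (t : ℤ) :
    𝔼 x : ι → Bool, (if t ≤ agreementCount o α x then (1 : ℝ) else 0) *
        (if t ≤ agreementCount o β x then (1 : ℝ) else 0) ≤
      (𝔼 x : ι → Bool, if t ≤ agreementCount o α x then (1 : ℝ) else 0) *
        𝔼 x : ι → Bool, if t ≤ agreementCount o β x then (1 : ℝ) else 0 := by
  have beq_beq_eq (a b c : Bool) : ((a == c) == decide (a = b)) = (b == c) := by
    revert a b c; decide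
  let N : ℤ := Fintype.card {j : {j // j ≠ o} // α j = β j}
  have hβ (x : ι → Bool) : (trueCount fun j : {j // j ≠ o} =>
      (α j == (x o ^^ x j)) == decide (α j = β j)) = agreementCount o β x :=
    congrArg trueCount (funext fun j => beq_beq_eq (α j) (β j) (x o ^^ x j))
  have law (K : ℤ → ℤ → ℝ) := (expect_agreement_pattern o α fun y =>
    K (trueCount y) (trueCount fun j => y j == decide (α j = β j))).trans
    (expect_trueCount_beq_of_card_compl_eq_succ K _ h)
  simp only [hβ] at law
  have hshift (v W : ℤ) : v + (N + W) + (1 - t) = N + (1 - t) + v + W := by ring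
  have hwalk := expect_posIndicator_mul_le (ι := {j : {j // j ≠ o} // α j = β j}) (N + (1 - t))
  simp only [ite_le_eq_posIndicator]
  simp only [← hshift] at hwalk
  exact (law fun c d => posIndicator (c + (1 - t)) * posIndicator (d + (1 - t))).trans_le
    (hwalk.trans_eq (congrArg₂ (· * ·) (law fun c _ => posIndicator (c + (1 - t)))
      (law fun _ d => posIndicator (d + (1 - t)))).symm)

end Agreement

section Orthogonality

lemma card_subtype_ne_not_eq_succ_of_involutive {ι : Type*} [Fintype ι] [DecidableEq ι]
    {p : ι → Prop} [DecidablePred p] {o : ι} (ho : p o) {φ : ι → ι} (hφ : φ.Involutive)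
    (hp : ∀ j, p (φ j) ↔ ¬p j) :
    Fintype.card {j : {j // j ≠ o} // ¬p j} = Fintype.card {j : {j // j ≠ o} // p j} + 1 := by
  have hcard (q : ι → Prop) [DecidablePred q] :
      Fintype.card {j : {j // j ≠ o} // q j} = #((univ.filter q).erase o) := by
    rw [Fintype.card_congr (Equiv.subtypeSubtypeEquivSubtypeInter _ _), Fintype.card_subtype]
    congr 1; ext; simp
  rw [hcard fun j => ¬p j, hcard p, card_erase_add_one (by simpa using ho),
    erase_eq_of_notMem (by simpa using ho)]
  exact card_nbij' φ φ (fun j hj => by simpa [hp] using hj) (fun j hj => by simpa [hp] using hj)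
    (fun j _ => hφ j) fun j _ => hφ j

variable {k : ℕ}

lemma bdot_const_false (a : Fin k → Bool) : bdot a (fun _ => false) = false := by
  simp [bdot]

lemma bdot_update_not (a j : Fin k → Bool) (i : Fin k) :
    bdot a (Function.update j i (!j i)) = (bdot a j ^^ a i) := by
  have hsplit (c : Bool) : #{t | a t && Function.update j i c t} =
      (a i && c).toNat + #{t ∈ ({i}ᶜ : Finset (Fin k)) | a t && j t} := by
    rw [card_filter, Fintype.sum_eq_add_sum_compl i, card_filter, Function.update_self]
    congr 1
    · cases a i && c <;> rfl
    · refine sum_congr rfl fun t ht => ?_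
      rw [Function.update_of_ne (by simpa using ht)]
  have hj := hsplit (j i)
  rw [Function.update_eq_self] at hj
  rw [bdot, bdot, hsplit, hj]
  generalize #{t ∈ ({i}ᶜ : Finset (Fin k)) | a t && j t} = r
  rcases Nat.mod_two_eq_zero_or_one r with hr | hr <;> cases a i <;> cases j i <;>
    simp [Nat.add_mod, hr]

lemma card_bdot_ne_eq_succ {a b : Fin k → Bool} (hab : a ≠ b) :
    Fintype.card {j : {j : Fin k → Bool // j ≠ fun _ => false} // ¬bdot a j = bdot b j} =
      Fintype.card {j : {j : Fin k → Bool // j ≠ fun _ => false} // bdot a j = bdot b j} + 1 := by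
  obtain ⟨i, hi⟩ := Function.ne_iff.1 hab
  have hflip : Function.Involutive fun j : Fin k → Bool => Function.update j i (!j i) :=
    fun j => by simp
  have xor_eq_xor (c d u v : Bool) (h : u ≠ v) : (c ^^ u) = (d ^^ v) ↔ ¬c = d := by
    revert c d u v; decide
  refine card_subtype_ne_not_eq_succ_of_involutive (p := fun j => bdot a j = bdot b j)
    (by simp only [bdot_const_false]) hflip fun j => ?_
  simp only [bdot_update_not, xor_eq_xor _ _ _ _ hi]

end Orthogonality

/-- With `x` uniform on `{0,1}^n` (`n = 2^k`), `J_{a,x}` as above, and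
`Z_a` the indicator of `J_{a,x} ≥ t`, for every threshold `t` and all `a ≠ b`
the indicators `Z_a, Z_b` have non-positive covariance:
`E[Z_a Z_b] ≤ E[Z_a]·E[Z_b]`. -/
theorem Jcount_indicators_nonpositive_covariance
    (k : ℕ) (hk : 1 ≤ k) (t : ℝ) (a b : Fin k → Bool) (hab : a ≠ b) :
    (∑ x : (Fin k → Bool) → Bool,
        (if t ≤ (Jcount a x : ℝ) then (1 : ℝ) else 0)
          * (if t ≤ (Jcount b x : ℝ) then (1 : ℝ) else 0)) / (2 : ℝ) ^ (2 ^ k)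
      ≤ ((∑ x : (Fin k → Bool) → Bool,
            if t ≤ (Jcount a x : ℝ) then (1 : ℝ) else 0) / (2 : ℝ) ^ (2 ^ k))
        * ((∑ x : (Fin k → Bool) → Bool,
            if t ≤ (Jcount b x : ℝ) then (1 : ℝ) else 0) / (2 : ℝ) ^ (2 ^ k)) := by
  have hcov := expect_agreementCount_ge_mul_le _ _ _ (card_bdot_ne_eq_succ hab) ⌈t⌉
  simpa only [agreementCount_eq_Jcount, Int.ceil_le, Int.cast_natCast,
    Fintype.expect_eq_sum_div_card, Fintype.card_pi, Fintype.card_bool, prod_const, card_univ,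
    Fintype.card_fin, Nat.cast_pow, Nat.cast_ofNat] using hcov
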